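/- Let v₊, v₋ ∈ ℝ^{n+2} be null with ζ := ⟨v₊,v₋⟩ ∈ (0,1), let b > 0, and let χ:(0,b) → End(ℝ^{n+2}) be continuous and bounded with each χ(t) skew-adjoint with respect to the Minkowski form. Then there is a constant C such that for all p,t ∈ (0,b): ‖exp(−ln(t/p)·(v₋∧v₊)) ∘ χ(t) ∘ exp(ln(t/p)·(v₋∧v₊))‖ ≤ C·((t/p)^{−ζ} + (t/p)^{ζ}). Moreover, for each p ∈ (0,b), the bounding function t ↦ (t/p)^{−ζ} + (t/p)^{ζ} is integrable over (0,b), and t·((t/p)^{−ζ} + (t/p)^{ζ}) → 0 as t → 0⁺. -/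

import Mathlib

open scoped BigOperators Topology
open Filter Set MeasureTheory

noncomputable section

abbrev E (n : ℕ) := EuclideanSpace ℝ (Fin (n + 2))

/-- Minkowski inner product of signature (n+1,1). -/
def mink {n : ℕ} (x y : E n) : ℝ :=
  ∑ i, (if i = Fin.last (n + 1) then (-1 : ℝ) else 1) * x i * y i

variable {n : ℕ}

lemma mink_comm (x y : E n) : mink x y = mink y x :=
  Finset.sum_congr rfl fun i _ => by ring

lemma mink_add_right (v x y : E n) : mink v (x + y) = mink v x + mink v y := by
  simp [mink, mul_add, Finset.sum_add_distrib]

lemma mink_smul_right (v : E n) (c : ℝ) (x : E n) : mink v (c • x) = c * mink v x := by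
  unfold mink
  rw [Finset.mul_sum]
  refine Finset.sum_congr rfl fun i _ => ?_
  simp only [PiLp.smul_apply, smul_eq_mul]
  ring

lemma mink_add_left (x y v : E n) : mink (x + y) v = mink x v + mink y v := by
  rw [mink_comm, mink_add_right, mink_comm v x, mink_comm v y]

lemma mink_smul_left (c : ℝ) (x v : E n) : mink (c • x) v = c * mink x v := by
  rw [mink_comm, mink_smul_right, mink_comm v x]

/-- `v ∧ w` as an endomorphism: `x ↦ ⟨v,x⟩ w − ⟨w,x⟩ v`. -/
def wedge {n : ℕ} (v w : E n) : E n →L[ℝ] E n :=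
  LinearMap.toContinuousLinearMap
    { toFun := fun x => mink v x • w - mink w x • v
      map_add' := by
        intro x y
        simp only [mink_add_right, add_smul]
        abel
      map_smul' := by
        intro c x
        simp only [mink_smul_right, RingHom.id_apply, mul_smul, smul_sub] }

/-- rank one endomorphism `vw* : x ↦ ⟨x,w⟩ v`. -/
def rankOne {n : ℕ} (v w : E n) : E n →L[ℝ] E n :=
  LinearMap.toContinuousLinearMap
    { toFun := fun x => mink x w • v
      map_add' := by
        intro x y
        simp only [mink_add_left, add_smul]
      map_smul' := by
        intro c x
        simp only [mink_smul_left, RingHom.id_apply, mul_smul] }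

/-! With `ζ = ⟨v₊, v₋⟩`, the boost generator `v₋ ∧ v₊` is diagonalisable with weights `ζ`, `-ζ`, `0`
on `ℝ v₊`, `ℝ v₋` and `{v₊, v₋}ᗮ`. Conjugation by its exponential scales the `(i, j)` block of an
endomorphism by the exponential of a weight difference, so only the two blocks between `ℝ v₊` and
`ℝ v₋` could grow with exponent `2ζ`. They are multiples of `⟨v₋, χ v₋⟩` and `⟨v₊, χ v₊⟩`, which
vanish because `χ` is skew-adjoint; every other block grows with exponent at most `ζ`. -/

section Idempotents

variable {ι A : Type*} [Fintype ι] [NormedRing A] {e : ι → A}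

lemma sum_smul_mul_sum_smul_of_orthogonalIdempotents {𝕜 : Type*} [CommSemiring 𝕜] [Algebra 𝕜 A]
    (he : OrthogonalIdempotents e) (a b : ι → 𝕜) :
    (∑ i, a i • e i) * ∑ i, b i • e i = ∑ i, (a i * b i) • e i := by
  classical
  simp only [Finset.sum_mul_sum, smul_mul_smul_comm, he.mul_eq, smul_ite, smul_zero,
    Finset.sum_ite_eq, Finset.mem_univ, if_true]

lemma exp_sum_smul_of_completeOrthogonalIdempotents {𝕜 : Type*} [NormedField 𝕜]
    [NormedAlgebra ℚ 𝕜] [CompleteSpace 𝕜] [NormedAlgebra 𝕜 A]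
    (he : CompleteOrthogonalIdempotents e) (a : ι → 𝕜) :
    NormedSpace.exp (∑ i, a i • e i) = ∑ i, NormedSpace.exp (a i) • e i := by
  let φ : (ι → 𝕜) →+* A :=
    { toFun a := ∑ i, a i • e i
      map_one' := by simp [he.complete]
      map_mul' a b :=
        (sum_smul_mul_sum_smul_of_orthogonalIdempotents he.toOrthogonalIdempotents a b).symm
      map_zero' := by simp
      map_add' a b := by simp [add_smul, Finset.sum_add_distrib] }
  have hφ : Continuous φ :=
    continuous_finsetSum _ fun i _ => (continuous_apply i).smul continuous_const
  let : Algebra ℚ A := Algebra.compHom A (algebraMap ℚ 𝕜)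
  calc NormedSpace.exp (φ a) = φ (NormedSpace.exp a) := (NormedSpace.map_exp φ hφ a).symm
    _ = ∑ i, NormedSpace.exp (a i) • e i := by rw [Pi.exp_def]; rfl

variable [NormedAlgebra ℝ A]

lemma exp_neg_mul_mul_exp_of_completeOrthogonalIdempotents
    (he : CompleteOrthogonalIdempotents e) (a : ι → ℝ) (x : A) :
    NormedSpace.exp (-∑ i, a i • e i) * x * NormedSpace.exp (∑ i, a i • e i) =
      ∑ i, ∑ j, Real.exp (a j - a i) • (e i * x * e j) := by
  have hneg : -∑ i, a i • e i = ∑ i, (-a i) • e i := by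
    simp only [neg_smul, Finset.sum_neg_distrib]
  rw [hneg, exp_sum_smul_of_completeOrthogonalIdempotents he,
    exp_sum_smul_of_completeOrthogonalIdempotents he, ← Real.exp_eq_exp_ℝ, Finset.sum_mul,
    Finset.sum_mul_sum]
  refine Finset.sum_congr rfl fun i _ => Finset.sum_congr rfl fun j _ => ?_
  rw [smul_mul_assoc, smul_mul_smul_comm, ← Real.exp_add, neg_add_eq_sub]

lemma norm_exp_neg_mul_mul_exp_le_of_completeOrthogonalIdempotents
    (he : CompleteOrthogonalIdempotents e) (a : ι → ℝ) {x : A} {δ : ℝ}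
    (hx : ∀ i j, δ < a j - a i → e i * x * e j = 0) :
    ‖NormedSpace.exp (-∑ i, a i • e i) * x * NormedSpace.exp (∑ i, a i • e i)‖ ≤
      Real.exp δ * (∑ i, ‖e i‖) ^ 2 * ‖x‖ := by
  have hblock (i j : ι) : ‖Real.exp (a j - a i) • (e i * x * e j)‖ ≤
      Real.exp δ * (‖e i‖ * ‖x‖ * ‖e j‖) := by
    rcases lt_or_ge δ (a j - a i) with hlt | hle
    · rw [hx i j hlt, smul_zero, norm_zero]
      positivity
    · rw [norm_smul, Real.norm_eq_abs, Real.abs_exp]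
      gcongr
      exact norm_mul₃_le
  rw [exp_neg_mul_mul_exp_of_completeOrthogonalIdempotents he]
  calc ‖∑ i, ∑ j, Real.exp (a j - a i) • (e i * x * e j)‖
      ≤ ∑ i, ∑ j, Real.exp δ * (‖e i‖ * ‖x‖ * ‖e j‖) :=
        norm_sum_le_of_le _ fun i _ => norm_sum_le_of_le _ fun j _ => hblock i j
    _ = Real.exp δ * (∑ i, ‖e i‖) ^ 2 * ‖x‖ := by
        simp only [sq, ← Finset.mul_sum, ← Finset.sum_mul]
        ring

end Idempotents

lemma sum_univ_signType {M : Type*} [AddCommMonoid M] (f : SignType → M) :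
    ∑ i, f i = f 0 + (f (-1) + f 1) := by
  simp [SignType.univ_eq]

section Boost

variable {V : Type*} [NormedAddCommGroup V] [NormedSpace ℝ V] (B : V →L[ℝ] V →L[ℝ] ℝ)

/-- The endomorphism `v ∧ w : x ↦ B v x • w - B w x • v` attached to a continuous bilinear form
`B`; for the Minkowski form it is `wedge`. -/
def formWedge (v w : V) : V →L[ℝ] V :=
  (B v).smulRight w - (B w).smulRight v

/-- The spectral projections of `formWedge B vm vp`, for `B`-null vectors `vp`, `vm` with
`B vp vm ≠ 0`: the sign `i` indexes the eigenvalue `i * B vp vm`, so that `1`, `-1` and `0` give the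
projections onto `ℝ vp`, `ℝ vm` and their `B`-orthogonal complement. -/
def boostProjection (vp vm : V) : SignType → V →L[ℝ] V
  | .pos => (B vp vm)⁻¹ • (B vm).smulRight vp
  | .neg => (B vp vm)⁻¹ • (B vp).smulRight vm
  | .zero => 1 - (B vp vm)⁻¹ • ((B vm).smulRight vp + (B vp).smulRight vm)

variable {B} {vp vm : V}

lemma completeOrthogonalIdempotents_boostProjection (hB : ∀ x y, B x y = B y x)
    (hvp : B vp vp = 0) (hvm : B vm vm = 0) (hζ : B vp vm ≠ 0) :
    CompleteOrthogonalIdempotents (boostProjection B vp vm) := by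
  have hsymm : B vm vp = B vp vm := hB vm vp
  refine CompleteOrthogonalIdempotents.iff_ortho_complete.2 ⟨?_, ?_⟩
  · rintro (_ | _ | _) (_ | _ | _) hne
    all_goals first
      | contradiction
      | ext x
        simp [boostProjection, hvp, hvm, hsymm, hζ, mul_comm _ (B vp vm)]
  · simp only [sum_univ_signType, boostProjection]
    module

lemma formWedge_eq_sum_smul_boostProjection (hζ : B vp vm ≠ 0) :
    formWedge B vm vp = ∑ i : SignType, (i * B vp vm) • boostProjection B vp vm i := by
  ext x
  simp [formWedge, boostProjection, sum_univ_signType, smul_smul, hζ, ← sub_eq_neg_add]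

lemma apply_self_eq_zero_of_skew (hB : ∀ x y, B x y = B y x) {X : V →L[ℝ] V}
    (hX : ∀ x y, B (X x) y = -B x (X y)) (v : V) : B v (X v) = 0 := by
  linarith [hX v v, hB (X v) v]

lemma boostProjection_mul_mul_boostProjection_neg (hB : ∀ x y, B x y = B y x) {X : V →L[ℝ] V}
    (hX : ∀ x y, B (X x) y = -B x (X y)) {i : SignType} (hi : i ≠ 0) :
    boostProjection B vp vm i * X * boostProjection B vp vm (-i) = 0 := by
  rcases i with _ | _ | _
  · exact absurd rfl hi
  · ext x
    simp [boostProjection, apply_self_eq_zero_of_skew hB hX]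
  · ext x
    simp [boostProjection, apply_self_eq_zero_of_skew hB hX]

lemma ne_zero_and_eq_neg_of_abs_lt_mul_sub_mul {i j : SignType} {c : ℝ}
    (h : |c| < j * c - i * c) : i ≠ 0 ∧ j = -i := by
  have habs := abs_nonneg c
  have hle := le_abs_self c
  have hneg_le := neg_le_abs c
  rcases i with _ | _ | _ <;> rcases j with _ | _ | _ <;> simp at h ⊢ <;> linarith

lemma norm_exp_neg_smul_formWedge_conj_le (hB : ∀ x y, B x y = B y x)
    (hvp : B vp vp = 0) (hvm : B vm vm = 0) (hζ : B vp vm ≠ 0) {X : V →L[ℝ] V}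
    (hX : ∀ x y, B (X x) y = -B x (X y)) (s : ℝ) :
    ‖NormedSpace.exp ((-s) • formWedge B vm vp) * X *
        NormedSpace.exp (s • formWedge B vm vp)‖ ≤
      Real.exp |s * B vp vm| * (∑ i, ‖boostProjection B vp vm i‖) ^ 2 * ‖X‖ := by
  have hgen : s • formWedge B vm vp =
      ∑ i : SignType, (i * (s * B vp vm)) • boostProjection B vp vm i := by
    simp only [formWedge_eq_sum_smul_boostProjection hζ, Finset.smul_sum, smul_smul,
      mul_left_comm s]
  rw [neg_smul, hgen]
  refine norm_exp_neg_mul_mul_exp_le_of_completeOrthogonalIdempotents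
    (completeOrthogonalIdempotents_boostProjection hB hvp hvm hζ) _ fun i j hij => ?_
  obtain ⟨hi, rfl⟩ := ne_zero_and_eq_neg_of_abs_lt_mul_sub_mul hij
  exact boostProjection_mul_mul_boostProjection_neg hB hX hi

end Boost

section MinkowskiForm

/-- `mink` as a continuous bilinear form, so that the results on general forms apply to it. -/
def minkForm (n : ℕ) : E n →L[ℝ] E n →L[ℝ] ℝ :=
  (LinearMap.mk₂ ℝ mink mink_add_left mink_smul_left mink_add_right
    fun c v x => mink_smul_right v c x).toContinuousBilinearMap

lemma minkForm_apply (x y : E n) : minkForm n x y = mink x y := rfl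

lemma formWedge_minkForm (v w : E n) : formWedge (minkForm n) v w = wedge v w := rfl

end MinkowskiForm

section PowerWeight

lemma exp_abs_log_mul_le_rpow_neg_add_rpow {r : ℝ} (hr : 0 < r) (ζ : ℝ) :
    Real.exp |Real.log r * ζ| ≤ r ^ (-ζ) + r ^ ζ := by
  rw [Real.rpow_def_of_pos hr, Real.rpow_def_of_pos hr, mul_neg, add_comm]
  exact Real.exp_abs_le _

lemma integrableOn_Ioo_div_rpow {r b p : ℝ} (hr : -1 < r) (hb : 0 < b) (hp : 0 < p) :
    IntegrableOn (fun t : ℝ => (t / p) ^ r) (Ioo 0 b) := by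
  have h := ((intervalIntegral.integrableOn_Ioo_rpow_iff hb).2 hr).div_const (p ^ r)
  exact IntegrableOn.congr_fun h (fun t ht => (Real.div_rpow ht.1.le hp.le r).symm)
    measurableSet_Ioo

lemma tendsto_mul_div_rpow_nhdsGT_zero {r p : ℝ} (hr : -1 < r) (hp : 0 < p) :
    Tendsto (fun t : ℝ => t * (t / p) ^ r) (𝓝[>] 0) (𝓝 0) := by
  have hcont : ContinuousAt (fun t : ℝ => p * (t / p) ^ (1 + r)) 0 :=
    continuousAt_const.mul
      ((continuousAt_id.div_const p).rpow_const (Or.inr (by linarith)))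
  have hlim := hcont.tendsto.mono_left (nhdsWithin_le_nhds (s := Ioi 0))
  rw [zero_div, Real.zero_rpow (by linarith), mul_zero] at hlim
  refine hlim.congr' ?_
  filter_upwards [self_mem_nhdsWithin] with t ht
  rw [Real.rpow_add (div_pos ht hp), Real.rpow_one]
  field_simp

end PowerWeight

theorem stmt5_general {V : Type*} [NormedAddCommGroup V] [NormedSpace ℝ V]
    (B : V →L[ℝ] V →L[ℝ] ℝ) (hB : ∀ x y, B x y = B y x) (vp vm : V)
    (hvp : B vp vp = 0) (hvm : B vm vm = 0) (hζ0 : B vp vm ≠ 0) (hζ1 : |B vp vm| < 1)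
    (b : ℝ) (χ : ℝ → V →L[ℝ] V)
    (hχb : ∃ D : ℝ, ∀ t ∈ Ioo (0 : ℝ) b, ‖χ t‖ ≤ D)
    (hχskew : ∀ t ∈ Ioo (0 : ℝ) b, ∀ x y : V, B (χ t x) y = -B x (χ t y)) :
    (∃ C : ℝ, ∀ p ∈ Ioo (0 : ℝ) b, ∀ t ∈ Ioo (0 : ℝ) b,
        ‖NormedSpace.exp ((-Real.log (t / p)) • formWedge B vm vp) * χ t *
            NormedSpace.exp (Real.log (t / p) • formWedge B vm vp)‖ ≤
          C * ((t / p) ^ (-(B vp vm)) + (t / p) ^ (B vp vm))) ∧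
    ∀ p ∈ Ioo (0 : ℝ) b,
      IntegrableOn (fun t : ℝ => (t / p) ^ (-(B vp vm)) + (t / p) ^ (B vp vm)) (Ioo 0 b) ∧
      Tendsto (fun t : ℝ => t * ((t / p) ^ (-(B vp vm)) + (t / p) ^ (B vp vm)))
        (𝓝[>] 0) (𝓝 0) := by
  obtain ⟨hζ_gt, hζ_lt⟩ := abs_lt.1 hζ1
  refine ⟨?_, fun p hp => ⟨?_, ?_⟩⟩
  · obtain ⟨D, hD⟩ := hχb
    set K := (∑ i, ‖boostProjection B vp vm i‖) ^ 2
    refine ⟨K * D, fun p hp t ht => ?_⟩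
    calc _ ≤ Real.exp |Real.log (t / p) * B vp vm| * K * ‖χ t‖ :=
          norm_exp_neg_smul_formWedge_conj_le hB hvp hvm hζ0 (hχskew t ht) _
      _ ≤ ((t / p) ^ (-(B vp vm)) + (t / p) ^ (B vp vm)) * K * D := by
          have hpos : 0 < t / p := div_pos ht.1 hp.1
          gcongr
          · exact exp_abs_log_mul_le_rpow_neg_add_rpow hpos _
          · exact hD t ht
      _ = _ := by ring
  · have hb : 0 < b := hp.1.trans hp.2
    exact (integrableOn_Ioo_div_rpow (by linarith) hb hp.1).add
      (integrableOn_Ioo_div_rpow (by linarith) hb hp.1)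
  · simpa only [mul_add, add_zero] using
      (tendsto_mul_div_rpow_nhdsGT_zero (r := -B vp vm) (by linarith) hp.1).add
        (tendsto_mul_div_rpow_nhdsGT_zero (r := B vp vm) (by linarith) hp.1)

/-- Lemma 3.2, Minkowski case. -/
theorem stmt5 {n : ℕ} (vp vm : E n)
    (hvp : mink vp vp = 0) (hvm : mink vm vm = 0)
    (hζ0 : 0 < mink vp vm) (hζ1 : mink vp vm < 1)
    (b : ℝ) (hb : 0 < b) (χ : ℝ → E n →L[ℝ] E n)
    (hχc : ContinuousOn χ (Set.Ioo 0 b))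
    (hχb : ∃ D : ℝ, ∀ t ∈ Set.Ioo (0:ℝ) b, ‖χ t‖ ≤ D)
    (hχskew : ∀ t ∈ Set.Ioo (0:ℝ) b, ∀ x y : E n, mink (χ t x) y = - mink x (χ t y)) :
    (∃ C : ℝ, ∀ p ∈ Set.Ioo (0:ℝ) b, ∀ t ∈ Set.Ioo (0:ℝ) b,
        ‖NormedSpace.exp ((-Real.log (t / p)) • wedge vm vp) * χ t *
            NormedSpace.exp ((Real.log (t / p)) • wedge vm vp)‖ ≤
          C * ((t / p) ^ (-(mink vp vm)) + (t / p) ^ (mink vp vm))) ∧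
    ∀ p ∈ Set.Ioo (0:ℝ) b,
      IntegrableOn (fun t : ℝ => (t / p) ^ (-(mink vp vm)) + (t / p) ^ (mink vp vm))
          (Set.Ioo 0 b) ∧
      Tendsto (fun t : ℝ => t * ((t / p) ^ (-(mink vp vm)) + (t / p) ^ (mink vp vm)))
        (𝓝[>] 0) (𝓝 0) := by
  simpa only [formWedge_minkForm, minkForm_apply] using
    stmt5_general (minkForm n) mink_comm vp vm hvp hvm hζ0.ne' ((abs_of_pos hζ0).trans_lt hζ1) b χ
      hχb hχskew
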